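/- Let m, n be positive integers and a, b, c integers, and let ω_{a,b,c} be the normalized 3-cocycle on (ℤ/mℤ) × (ℤ/nℤ) given by ω_{a,b,c}(i,j,k) := exp(2πi·(a·i₁·⌊(j₁+k₁)/m⌋)/m)·exp(2πi·(b·i₂·⌊(j₁+k₁)/m⌋ + c·i₂·⌊(j₂+k₂)/n⌋)/n), where i₁ ∈ {0,…,m−1}, i₂ ∈ {0,…,n−1} are the canonical representatives of the components of i and sums of representatives are taken in ℤ. Then there exists an ω_{a,b,c}-anomalous action of (ℤ/mℤ) × (ℤ/nℤ) on C(𝕋²), where 𝕋² = U(1) × U(1): that is, an action of (ℤ/mℤ) × (ℤ/nℤ) on 𝕋² by homeomorphisms g ↦ φ_g and continuous functions μ(g,h) : 𝕋² → U(1), with μ(g,h) constantly 1 whenever g or h is zero, satisfying ω_{a,b,c}(g,h,k)·μ(g+h,k)(z,w)·μ(g,h)(z,w) = μ(g,h+k)(z,w)·μ(h,k)(φ_g⁻¹(z,w)) for all g,h,k and (z,w) ∈ 𝕋². -/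

import Mathlib

/-!
If `G` acts on a topological group `T` by translations through a homomorphism `χ : G → T`, then
for every 2-cocycle `κ` on `G` with values in the dual of `T` the 3-cocycle `κ(h, k)(χ g)` is
trivialized by `μ(g, h) = κ(g, h)⁻¹`: replacing `x` by `χ(g)⁻¹ x` in the character `κ(h, k)⁻¹`
multiplies it by the constant `κ(h, k)(χ g)`, and the remaining factors cancel by the cocycle
identity.

On the torus, `ω_{a,b,c}` is of this form: `κ` is the product of the characters `zᵃ wᵇ` and `wᶜ`
raised to the carries of addition in `ℤ/mℤ` and in `ℤ/nℤ` respectively.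
-/

open scoped Real

section AnomalousAction

variable {G H M X T A : Type*}

/-- An `ω`-anomalous action of `G` on `C(X)`, phrased on the spectrum `X`: an action `φ` of `G` by
homeomorphisms with a normalized 2-cochain `μ` of `A`-valued functions whose failure to be a
cocycle is `ω`. The group `G` is additive and `A` stands for `U(1)`. -/
structure IsAnomalousAction [AddMonoid G] [TopologicalSpace X] [TopologicalSpace A] [Monoid A]
    (ω : G → G → G → A) (φ : G → X ≃ₜ X) (μ : G → G → C(X, A)) : Prop where
  map_zero : φ 0 = Homeomorph.refl X
  map_add : ∀ g h x, φ (g + h) x = φ g (φ h x)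
  eq_one : ∀ g h, g = 0 ∨ h = 0 → μ g h = 1
  anomaly : ∀ g h k x,
    ω g h k * μ (g + h) k x * μ g h x = μ g (h + k) x * μ h k ((φ g).symm x)

/-- A normalized 2-cocycle on `G` with values in the trivial `G`-module `M`, with `G` written
additively and `M` multiplicatively. -/
structure IsNormalizedTwoCocycle [AddZeroClass G] [MulOneClass M] (c : G → G → M) : Prop where
  eq_one : ∀ g h, g = 0 ∨ h = 0 → c g h = 1
  cocycle : ∀ g h k, c (g + h) k * c g h = c g (h + k) * c h k

namespace IsNormalizedTwoCocycle

theorem mul [AddZeroClass G] [CommMonoid M] {c d : G → G → M} (hc : IsNormalizedTwoCocycle c)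
    (hd : IsNormalizedTwoCocycle d) : IsNormalizedTwoCocycle fun g h => c g h * d g h where
  eq_one g h hgh := by rw [hc.eq_one g h hgh, hd.eq_one g h hgh, one_mul]
  cocycle g h k := by rw [mul_mul_mul_comm, hc.cocycle, hd.cocycle, mul_mul_mul_comm]

theorem comp [AddZeroClass G] [AddZeroClass H] [MulOneClass M] {c : H → H → M}
    (hc : IsNormalizedTwoCocycle c) (f : G →+ H) :
    IsNormalizedTwoCocycle fun g h => c (f g) (f h) where
  eq_one g h hgh := hc.eq_one _ _ <| hgh.imp (by rintro rfl; exact map_zero f)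
    (by rintro rfl; exact map_zero f)
  cocycle g h k := by simpa only [map_add] using hc.cocycle (f g) (f h) (f k)

theorem isAnomalousAction_mulLeft [AddMonoid G] [TopologicalSpace T] [Group T]
    [SeparatelyContinuousMul T] [TopologicalSpace A] [CommGroup A] [IsTopologicalGroup A]
    {c : G → G → (T →ₜ* A)} (hc : IsNormalizedTwoCocycle c) (χ : AddChar G T) :
    IsAnomalousAction (fun g h k => c h k (χ g)) (fun g => Homeomorph.mulLeft (χ g))
      (fun g h => ((c g h)⁻¹ : T →ₜ* A)) where
  map_zero := by ext x; simp
  map_add g h x := by simp [AddChar.map_add_eq_mul, mul_assoc]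
  eq_one g h hgh := by rw [hc.eq_one g h hgh, inv_one]; rfl
  anomaly g h k x := by
    have cocycle_at : c (g + h) k x * c g h x = c g (h + k) x * c h k x :=
      DFunLike.congr_fun (hc.cocycle g h k) x
    calc c h k (χ g) * (c (g + h) k x)⁻¹ * (c g h x)⁻¹
        = c h k (χ g) * (c (g + h) k x * c g h x)⁻¹ := by rw [mul_assoc, ← mul_inv]
      _ = (c g (h + k) x)⁻¹ * (c h k ((χ g)⁻¹ * x))⁻¹ := by
        rw [cocycle_at, map_mul, map_inv, mul_inv, mul_inv, inv_inv, mul_left_comm]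

end IsNormalizedTwoCocycle

end AnomalousAction

section Carry

/-- The carry `⌊(x + y) / m⌋` of the canonical representatives of `x` and `y`: the integral
2-cocycle classifying `ℤ` as an extension of `ℤ/mℤ` by `mℤ ≅ ℤ`. -/
def carry (m : ℕ) (x y : ZMod m) : ℤ := ((x.val : ℤ) + (y.val : ℤ)).fdiv m

variable (m : ℕ) [NeZero m]

theorem mul_carry (x y : ZMod m) : m * carry m x y = x.val + y.val - (x + y).val := by
  rw [carry, Int.fdiv_eq_ediv_of_nonneg _ m.cast_nonneg, ZMod.val_add, Int.natCast_mod,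
    Nat.cast_add, eq_sub_iff_add_eq, Int.mul_ediv_add_emod]

theorem carry_eq_zero {x y : ZMod m} (h : x = 0 ∨ y = 0) : carry m x y = 0 := by
  refine mul_left_cancel₀ (NeZero.ne (m : ℤ)) ?_
  rw [mul_carry]
  rcases h with rfl | rfl <;> simp

theorem carry_cocycle (x y z : ZMod m) :
    carry m (x + y) z + carry m x y = carry m x (y + z) + carry m y z := by
  refine mul_left_cancel₀ (NeZero.ne (m : ℤ)) ?_
  simp only [mul_add, mul_carry, add_assoc]
  ring

theorem isNormalizedTwoCocycle_zpow_carry {M : Type*} [Group M] (u : M) :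
    IsNormalizedTwoCocycle fun x y => u ^ carry m x y where
  eq_one x y hxy := by rw [carry_eq_zero m hxy, zpow_zero]
  cocycle x y z := by rw [← zpow_add, carry_cocycle, zpow_add]

end Carry

theorem toCircle_zpow_eq_circleExp {m : ℕ} [NeZero m] (x : ZMod m) (s : ℤ) :
    ZMod.toCircle x ^ s = Circle.exp (2 * π * ((s * x.val : ℤ) : ℝ) / m) := by
  rw [ZMod.toCircle_eq_circleExp, ← Circle.exp_zsmul, zsmul_eq_mul]
  push_cast
  ring_nf

theorem continuousMonoidHom_zpow_apply {T A : Type*} [TopologicalSpace T] [Monoid T]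
    [TopologicalSpace A] [CommGroup A] [IsTopologicalGroup A] (f : T →ₜ* A) (s : ℤ) (x : T) :
    (f ^ s) x = f x ^ s :=
  map_zpow (MonoidHom.mk' (fun f : T →ₜ* A => f x) fun _ _ => rfl) f s

section Torus

open ContinuousMonoidHom

variable (m n : ℕ)

/-- The embedding of `ℤ/mℤ × ℤ/nℤ` into the 2-torus, through which it acts by rotations. -/
noncomputable def torusEmbedding [NeZero m] [NeZero n] :
    AddChar (ZMod m × ZMod n) (Circle × Circle) where
  toFun g := (ZMod.toCircle g.1, ZMod.toCircle g.2)
  map_zero_eq_one' := by simp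
  map_add_eq_mul' g h := by simp [AddChar.map_add_eq_mul]

/-- The 2-cocycle on `ℤ/mℤ × ℤ/nℤ`, with values in the dual of the 2-torus, that pairs with
`torusEmbedding` to the anomaly `ω_{a,b,c}`. -/
noncomputable def torusCocycle (a b c : ℤ) (g h : ZMod m × ZMod n) : Circle × Circle →ₜ* Circle :=
  (fst Circle Circle ^ a * snd Circle Circle ^ b) ^ carry m g.1 h.1 *
    (snd Circle Circle ^ c) ^ carry n g.2 h.2

variable [NeZero m] [NeZero n] (a b c : ℤ)

theorem isNormalizedTwoCocycle_torusCocycle :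
    IsNormalizedTwoCocycle (torusCocycle m n a b c) :=
  ((isNormalizedTwoCocycle_zpow_carry m _).comp (.fst (ZMod m) (ZMod n))).mul
    ((isNormalizedTwoCocycle_zpow_carry n _).comp (.snd (ZMod m) (ZMod n)))

theorem torusCocycle_torusEmbedding (i j k : ZMod m × ZMod n) :
    torusCocycle m n a b c j k (torusEmbedding m n i) =
      Circle.exp (2 * π * ((a * i.1.val * carry m j.1 k.1 : ℤ) : ℝ) / m) *
      Circle.exp (2 * π *
        ((b * i.2.val * carry m j.1 k.1 + c * i.2.val * carry n j.2 k.2 : ℤ) : ℝ) / n) := by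
  set p := carry m j.1 k.1
  set q := carry n j.2 k.2
  calc torusCocycle m n a b c j k (torusEmbedding m n i)
      = (ZMod.toCircle i.1 ^ a * ZMod.toCircle i.2 ^ b) ^ p * (ZMod.toCircle i.2 ^ c) ^ q := by
        simp only [torusCocycle, mul_apply, continuousMonoidHom_zpow_apply]; rfl
    _ = ZMod.toCircle i.1 ^ (a * p) * ZMod.toCircle i.2 ^ (b * p + c * q) := by
        rw [mul_zpow, ← zpow_mul, ← zpow_mul, ← zpow_mul, mul_assoc, ← zpow_add]
    _ = _ := by
        rw [toCircle_zpow_eq_circleExp, toCircle_zpow_eq_circleExp, add_mul,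
          mul_right_comm a, mul_right_comm b, mul_right_comm c]

end Torus

/-- Section 4.4 of the paper.  Every explicit anomaly `ω_{a,b,c}` of
`(ℤ/mℤ) × (ℤ/nℤ)` is realized on the 2-torus `𝕋² = U(1) × U(1)`: there are an action of
`(ℤ/mℤ) × (ℤ/nℤ)` on `𝕋²` by homeomorphisms `g ↦ φ g` and normalized continuous functions
`μ g h : 𝕋² → U(1)` satisfying the anomalous cocycle equation for `ω_{a,b,c}`.  Here `i₁, i₂`
denote the canonical integer representatives of the two components (sums taken in `ℤ`, not
reduced) and `Int.fdiv` is floor division, so `Int.fdiv x m = ⌊x/m⌋`. -/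
theorem anomalous_action_on_two_torus
    (m n : ℕ) (hm : 0 < m) (hn : 0 < n) (a b c : ℤ)
    (ω : ZMod m × ZMod n → ZMod m × ZMod n → ZMod m × ZMod n → Circle)
    (hω : ∀ i j k : ZMod m × ZMod n,
      ω i j k =
        Circle.exp (2 * π *
            ((a * (i.1.val : ℤ) * (((j.1.val : ℤ) + (k.1.val : ℤ)).fdiv m) : ℤ) : ℝ) / m) *
        Circle.exp (2 * π *
            ((b * (i.2.val : ℤ) * (((j.1.val : ℤ) + (k.1.val : ℤ)).fdiv m)
              + c * (i.2.val : ℤ) * (((j.2.val : ℤ) + (k.2.val : ℤ)).fdiv n) : ℤ) : ℝ) / n)) :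
    ∃ (φ : ZMod m × ZMod n → (Circle × Circle ≃ₜ Circle × Circle))
      (μ : ZMod m × ZMod n → ZMod m × ZMod n → C(Circle × Circle, Circle)),
      φ 0 = Homeomorph.refl (Circle × Circle) ∧
      (∀ g h x, φ (g + h) x = φ g (φ h x)) ∧
      (∀ g h, g = 0 ∨ h = 0 → μ g h = 1) ∧
      (∀ g h k x,
        ω g h k * μ (g + h) k x * μ g h x = μ g (h + k) x * μ h k ((φ g).symm x)) := by
  have : NeZero m := ⟨hm.ne'⟩
  have : NeZero n := ⟨hn.ne'⟩
  have action := (isNormalizedTwoCocycle_torusCocycle m n a b c).isAnomalousAction_mulLeft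
    (torusEmbedding m n)
  have ω_eq : (fun g h k => torusCocycle m n a b c h k (torusEmbedding m n g)) = ω := by
    funext i j k
    exact (torusCocycle_torusEmbedding m n a b c i j k).trans (hω i j k).symm
  rw [ω_eq] at action
  exact ⟨_, _, action.map_zero, action.map_add, action.eq_one, action.anomaly⟩
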